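/- The normalized probabilists' Hermite polynomials t ↦ He_n(t)/√(n!), n = 0, 1, 2, …, form a Hilbert basis (a complete orthonormal system) of L²(ℝ, γ), where γ is the standard Gaussian measure on ℝ; in particular ∫_ℝ He_m(t)·He_n(t) dγ(t) = n!·δ_{mn} and the closed linear span of the polynomials is all of L²(ℝ, γ). -/

import Mathlib

open MeasureTheory ProbabilityTheory
open scoped Nat

noncomputable section

/-- The normalized probabilists' Hermite function `t ↦ He_n(t)/√(n!)`. -/
def normalizedHermite (n : ℕ) (t : ℝ) : ℝ :=
  Polynomial.aeval t (Polynomial.hermite n) / Real.sqrt (n ! : ℝ)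

/-!
Orthogonality is integration by parts: by Stein's identity `E[X p(X)] = E[p'(X)]`, the operator
`p ↦ X p - p'` that generates the Hermite polynomials is adjoint to differentiation in `L²(γ)`, so
`E[He_m q] = E[q^(m)]` for every polynomial `q`.

Completeness holds for every measure `μ` on `ℝ` whose exponential moments are finite near `0`. If
`f ∈ L²(μ)` is orthogonal to all polynomials, then the measures `f⁺ μ` and `f⁻ μ` have the same
moments. These moments are the Taylor coefficients at `0` of complex moment generating functions
that are holomorphic on a strip around the imaginary axis, so the two characteristic functions
agree and `f⁺ = f⁻` almost everywhere.
-/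

section MomentDeterminacy

open Filter Topology

lemma eventuallyEq_of_iteratedDeriv_eq {𝕜 : Type*} [NontriviallyNormedField 𝕜] [CompleteSpace 𝕜]
    [CharZero 𝕜] {f g : 𝕜 → 𝕜} {z : 𝕜} (hf : AnalyticAt 𝕜 f z) (hg : AnalyticAt 𝕜 g z)
    (h : ∀ n, iteratedDeriv n f z = iteratedDeriv n g z) : f =ᶠ[𝓝 z] g := by
  have hf_series := hf.hasFPowerSeriesAt
  simp only [h] at hf_series
  have hsub := hf_series.sub hg.hasFPowerSeriesAt
  rw [sub_self] at hsub
  filter_upwards [hsub.eventually_eq_zero] with w hw using sub_eq_zero.mp hw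

lemma isFiniteMeasure_of_zero_mem_integrableExpSet {Ω : Type*} {mΩ : MeasurableSpace Ω}
    {X : Ω → ℝ} {μ : Measure Ω} (h : 0 ∈ integrableExpSet X μ) : IsFiniteMeasure μ := by
  simpa [integrableExpSet, integrable_const_iff] using h

variable {μ ν : Measure ℝ}

lemma iteratedDeriv_complexMGF_id_zero (hμ : 0 ∈ interior (integrableExpSet id μ)) (n : ℕ) :
    iteratedDeriv n (complexMGF id μ) 0 = ((∫ x, x ^ n ∂μ : ℝ) : ℂ) := by
  rw [iteratedDeriv_complexMGF (by simpa using hμ), ← integral_complex_ofReal]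
  simp

lemma measure_ext_of_integral_pow_eq (hμ : 0 ∈ interior (integrableExpSet id μ))
    (hν : 0 ∈ interior (integrableExpSet id ν))
    (h : ∀ n : ℕ, ∫ x, x ^ n ∂μ = ∫ x, x ^ n ∂ν) : μ = ν := by
  have := isFiniteMeasure_of_zero_mem_integrableExpSet (interior_subset hμ)
  have := isFiniteMeasure_of_zero_mem_integrableExpSet (interior_subset hν)
  let I := interior (integrableExpSet id μ) ∩ interior (integrableExpSet id ν)
  have strip_preconnected : IsPreconnected (Complex.re ⁻¹' I) :=
    ((convex_integrableExpSet.interior.inter convex_integrableExpSet.interior).linear_preimage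
      Complex.reLm).isPreconnected
  have eventually_eq : complexMGF id μ =ᶠ[𝓝 0] complexMGF id ν :=
    eventuallyEq_of_iteratedDeriv_eq (analyticAt_complexMGF (by simpa using hμ))
      (analyticAt_complexMGF (by simpa using hν)) fun n ↦ by
        rw [iteratedDeriv_complexMGF_id_zero hμ, iteratedDeriv_complexMGF_id_zero hν, h]
  have eqOn_strip : Set.EqOn (complexMGF id μ) (complexMGF id ν) (Complex.re ⁻¹' I) :=
    (analyticOnNhd_complexMGF.mono fun _ hz ↦ hz.1).eqOn_of_preconnected_of_eventuallyEq
      (analyticOnNhd_complexMGF.mono fun _ hz ↦ hz.2) strip_preconnected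
      (by simpa [I] using ⟨hμ, hν⟩) eventually_eq
  refine Measure.ext_of_charFun (funext fun t ↦ ?_)
  rw [← complexMGF_id_mul_I, ← complexMGF_id_mul_I]
  exact eqOn_strip (by simpa [I] using ⟨hμ, hν⟩)

end MomentDeterminacy

section SignedDensity

open Filter Topology

variable {α E : Type*} [MeasurableSpace α] [NormedAddCommGroup E] [NormedSpace ℝ E]
  {μ : Measure α} {f : α → ℝ} {g : α → E}

lemma integrable_withDensity_ofReal (hf : AEMeasurable f μ) (hg : AEStronglyMeasurable g μ)
    (hfg : Integrable (fun x ↦ f x • g x) μ) :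
    Integrable g (μ.withDensity fun x ↦ ENNReal.ofReal (f x)) := by
  rw [integrable_withDensity_iff_integrable_smul₀' hf.ennreal_ofReal (by simp)]
  refine hfg.mono (hf.ennreal_ofReal.ennreal_toReal.aestronglyMeasurable.smul hg)
    (ae_of_all _ fun x ↦ ?_)
  simp only [ENNReal.toReal_ofReal', norm_smul, Real.norm_eq_abs]
  have max_le_abs : |max (f x) 0| ≤ |f x| := by
    rw [abs_of_nonneg (le_max_right _ _)]
    exact max_le (le_abs_self _) (abs_nonneg _)
  exact mul_le_mul_of_nonneg_right max_le_abs (norm_nonneg _)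

lemma integral_withDensity_ofReal_sub_integral_withDensity_ofReal_neg (hf : AEMeasurable f μ)
    (hpos : Integrable g (μ.withDensity fun x ↦ ENNReal.ofReal (f x)))
    (hneg : Integrable g (μ.withDensity fun x ↦ ENNReal.ofReal (-f x))) :
    ∫ x, g x ∂(μ.withDensity fun x ↦ ENNReal.ofReal (f x))
        - ∫ x, g x ∂(μ.withDensity fun x ↦ ENNReal.ofReal (-f x))
      = ∫ x, f x • g x ∂μ := by
  rw [integrable_withDensity_iff_integrable_smul₀' (by fun_prop) (by simp)] at hpos hneg
  rw [integral_withDensity_eq_integral_toReal_smul₀ (by fun_prop) (by simp),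
    integral_withDensity_eq_integral_toReal_smul₀ (by fun_prop) (by simp),
    ← integral_sub hpos hneg]
  simp only [ENNReal.toReal_ofReal', ← sub_smul, max_zero_sub_max_neg_zero_eq_self]

lemma ae_eq_zero_of_withDensity_ofReal_eq (hf : Integrable f μ)
    (h : μ.withDensity (fun x ↦ ENNReal.ofReal (f x))
      = μ.withDensity fun x ↦ ENNReal.ofReal (-f x)) :
    f =ᵐ[μ] 0 := by
  have hae := (withDensity_eq_iff hf.aemeasurable.ennreal_ofReal
    hf.aemeasurable.neg.ennreal_ofReal hf.lintegral_lt_top.ne).mp h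
  filter_upwards [hae] with x hx
  have hmax : max (f x) 0 = max (-f x) 0 := by
    simpa only [ENNReal.toReal_ofReal', Pi.neg_apply] using congrArg ENNReal.toReal hx
  rw [← max_zero_sub_max_neg_zero_eq_self (f x), hmax, sub_self, Pi.zero_apply]

lemma zero_mem_interior_integrableExpSet_withDensity_ofReal {μ : Measure ℝ} {f : ℝ → ℝ}
    (hf : AEMeasurable f μ) (hexp : ∀ᶠ t in 𝓝 0, Integrable (fun x ↦ f x * Real.exp (t * x)) μ) :
    0 ∈ interior (integrableExpSet id (μ.withDensity fun x ↦ ENNReal.ofReal (f x))) := by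
  rw [mem_interior_iff_mem_nhds]
  filter_upwards [hexp] with t ht
  exact integrable_withDensity_ofReal hf (by fun_prop) ht

lemma ae_eq_zero_of_integral_mul_pow_eq_zero {μ : Measure ℝ} {f : ℝ → ℝ}
    (hexp : ∀ᶠ t in 𝓝 0, Integrable (fun x ↦ f x * Real.exp (t * x)) μ)
    (hpow : ∀ n : ℕ, ∫ x, f x * x ^ n ∂μ = 0) : f =ᵐ[μ] 0 := by
  have hf : Integrable f μ := by simpa using hexp.self_of_nhds
  have hexp_pos := zero_mem_interior_integrableExpSet_withDensity_ofReal hf.aemeasurable hexp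
  have hexp_neg := zero_mem_interior_integrableExpSet_withDensity_ofReal hf.aemeasurable.neg
    (hexp.mono fun t ht ↦ by simpa using ht.neg)
  refine ae_eq_zero_of_withDensity_ofReal_eq hf
    (measure_ext_of_integral_pow_eq hexp_pos hexp_neg fun n ↦ ?_)
  have hsub := integral_withDensity_ofReal_sub_integral_withDensity_ofReal_neg hf.aemeasurable
    (integrable_pow_of_mem_interior_integrableExpSet hexp_pos n)
    (integrable_pow_of_mem_interior_integrableExpSet hexp_neg n)
  exact sub_eq_zero.mp (hsub.trans (hpow n))

end SignedDensity

section PolynomialDensity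

open Polynomial Filter Topology

variable {μ : Measure ℝ}

lemma integrable_polynomial_eval (hμ : 0 ∈ interior (integrableExpSet id μ)) (p : ℝ[X]) :
    Integrable (fun x ↦ p.eval x) μ := by
  induction p using Polynomial.induction_on' with
  | add p q hp hq =>
    simp only [eval_add]
    exact hp.add hq
  | monomial n a =>
    simp only [eval_monomial]
    exact (integrable_pow_of_mem_interior_integrableExpSet hμ n).const_mul a

lemma memLp_two_polynomial_eval (hμ : 0 ∈ interior (integrableExpSet id μ)) (p : ℝ[X]) :
    MemLp (fun x ↦ p.eval x) 2 μ := by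
  rw [memLp_two_iff_integrable_sq p.continuous.aestronglyMeasurable]
  simp only [← eval_pow]
  exact integrable_polynomial_eval hμ (p ^ 2)

lemma eventually_memLp_two_exp_mul (hμ : 0 ∈ interior (integrableExpSet id μ)) :
    ∀ᶠ t in 𝓝 0, MemLp (fun x ↦ Real.exp (t * x)) 2 μ := by
  have tendsto_two_mul : Tendsto (fun t : ℝ ↦ 2 * t) (𝓝 0) (𝓝 0) :=
    Continuous.tendsto' (by fun_prop) _ _ (mul_zero 2)
  filter_upwards [tendsto_two_mul.eventually (mem_interior_iff_mem_nhds.mp hμ)] with t ht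
  rw [memLp_two_iff_integrable_sq (by fun_prop)]
  refine Integrable.congr ht (ae_of_all _ fun x ↦ ?_)
  simp only [id, two_mul, add_mul, Real.exp_add, sq]

lemma ae_eq_zero_of_integral_mul_eval_eq_zero (hμ : 0 ∈ interior (integrableExpSet id μ))
    {f : ℝ → ℝ} (hf : MemLp f 2 μ) (h : ∀ p : ℝ[X], ∫ x, f x * p.eval x ∂μ = 0) : f =ᵐ[μ] 0 :=
  ae_eq_zero_of_integral_mul_pow_eq_zero
    ((eventually_memLp_two_exp_mul hμ).mono fun _ ht ↦ hf.integrable_mul ht)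
    fun n ↦ by simpa using h (X ^ n)

variable (hμ : 0 ∈ interior (integrableExpSet id μ))

/-- The map sending a real polynomial to the class of its evaluation function in `L²(μ)`, for a
measure `μ` on `ℝ` with finite exponential moments near `0`. -/
def polynomialToL2 : ℝ[X] →ₗ[ℝ] Lp ℝ 2 μ where
  toFun p := (memLp_two_polynomial_eval hμ p).toLp
  map_add' p q := by
    simp only [eval_add]
    exact MemLp.toLp_add (memLp_two_polynomial_eval hμ p) (memLp_two_polynomial_eval hμ q)
  map_smul' c p := by
    simp only [eval_smul]
    exact MemLp.toLp_const_smul c (memLp_two_polynomial_eval hμ p)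

lemma coeFn_polynomialToL2 (p : ℝ[X]) : polynomialToL2 hμ p =ᵐ[μ] fun x ↦ p.eval x :=
  MemLp.coeFn_toLp (memLp_two_polynomial_eval hμ p)

lemma inner_polynomialToL2_left (p : ℝ[X]) (f : Lp ℝ 2 μ) :
    inner ℝ (polynomialToL2 hμ p) f = ∫ x, f x * p.eval x ∂μ := by
  rw [L2.inner_def]
  refine integral_congr_ae ?_
  filter_upwards [coeFn_polynomialToL2 hμ p] with x hx
  simp [hx]

lemma inner_polynomialToL2 (p q : ℝ[X]) :
    inner ℝ (polynomialToL2 hμ p) (polynomialToL2 hμ q) = ∫ x, (p * q).eval x ∂μ := by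
  rw [inner_polynomialToL2_left]
  refine integral_congr_ae ?_
  filter_upwards [coeFn_polynomialToL2 hμ q] with x hx
  rw [hx, eval_mul, mul_comm]

lemma topologicalClosure_range_polynomialToL2 :
    (polynomialToL2 hμ).range.topologicalClosure = ⊤ := by
  rw [Submodule.topologicalClosure_eq_top_iff, Submodule.eq_bot_iff]
  intro f hf
  refine (Lp.eq_zero_iff_ae_eq_zero).mpr
    (ae_eq_zero_of_integral_mul_eval_eq_zero hμ (Lp.memLp f) fun p ↦ ?_)
  rw [← inner_polynomialToL2_left hμ]
  exact (Submodule.mem_orthogonal _ f).mp hf _ (LinearMap.mem_range_self _ p)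

lemma topologicalClosure_span_polynomialToL2_sequence (S : Polynomial.Sequence ℝ) :
    (Submodule.span ℝ (Set.range fun n ↦ polynomialToL2 hμ (S n))).topologicalClosure = ⊤ := by
  have span_S : Submodule.span ℝ (Set.range S) = ⊤ :=
    S.span fun n ↦ (leadingCoeff_ne_zero.mpr (S.ne_zero n)).isUnit
  rw [Set.range_comp' (polynomialToL2 hμ) S, Submodule.span_image, span_S, Submodule.map_top]
  exact topologicalClosure_range_polynomialToL2 hμ

end PolynomialDensity

section Stein

open scoped NNReal

variable {m : ℝ} {v : ℝ≥0}

lemma integrable_gaussianReal_iff {E : Type*} [NormedAddCommGroup E] [NormedSpace ℝ E]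
    {f : ℝ → E} (hv : v ≠ 0) :
    Integrable f (gaussianReal m v) ↔ Integrable fun x ↦ gaussianPDFReal m v x • f x := by
  rw [gaussianReal_of_var_ne_zero m hv, integrable_withDensity_iff_integrable_smul'
    (measurable_gaussianPDF m v) (ae_of_all _ fun _ ↦ gaussianPDF_lt_top)]
  simp only [toReal_gaussianPDF]

lemma hasDerivAt_gaussianPDFReal (m : ℝ) (v : ℝ≥0) (x : ℝ) :
    HasDerivAt (gaussianPDFReal m v) (-((x - m) / v) * gaussianPDFReal m v x) x := by
  have hexponent : HasDerivAt (fun x : ℝ ↦ -(x - m) ^ 2 / (2 * v)) (-((x - m) / v)) x := by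
    refine ((((hasDerivAt_id' x).sub_const m).pow 2).neg.div_const (2 * v : ℝ)).congr_deriv ?_
    simp only [Nat.cast_ofNat, Nat.add_one_sub_one, pow_one, mul_one]
    ring
  rw [gaussianPDFReal_def]
  exact (hexponent.exp.const_mul _).congr_deriv (by ring)

lemma integral_sub_mean_mul_gaussianReal {f f' : ℝ → ℝ} (hderiv : ∀ x, HasDerivAt f (f' x) x)
    (hf : Integrable f (gaussianReal m v)) (hf' : Integrable f' (gaussianReal m v))
    (hmul : Integrable (fun x ↦ (x - m) * f x) (gaussianReal m v)) :
    ∫ x, (x - m) * f x ∂(gaussianReal m v) = v * ∫ x, f' x ∂(gaussianReal m v) := by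
  obtain rfl | hv := eq_or_ne v 0
  · simp [gaussianReal_zero_var]
  have hv_real : (v : ℝ) ≠ 0 := by exact_mod_cast hv
  simp only [integrable_gaussianReal_iff hv, smul_eq_mul] at hf hf' hmul
  have hf_pdf_deriv : Integrable (f * fun x ↦ -((x - m) / v) * gaussianPDFReal m v x) :=
    (hmul.const_mul (-(v : ℝ)⁻¹)).congr (ae_of_all _ fun x ↦ by simp only [Pi.mul_apply]; ring)
  have hparts : ∫ x, f x * (-((x - m) / v) * gaussianPDFReal m v x)
      = -∫ x, f' x * gaussianPDFReal m v x :=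
    integral_mul_deriv_eq_deriv_mul_of_integrable (fun x _ ↦ hderiv x)
      (fun x _ ↦ hasDerivAt_gaussianPDFReal m v x) hf_pdf_deriv
      (hf'.congr (ae_of_all _ fun x ↦ mul_comm _ _)) (hf.congr (ae_of_all _ fun x ↦ mul_comm _ _))
  rw [integral_gaussianReal_eq_integral_smul hv, integral_gaussianReal_eq_integral_smul hv]
  calc ∫ x, gaussianPDFReal m v x • ((x - m) * f x)
      = ∫ x, -v * (f x * (-((x - m) / v) * gaussianPDFReal m v x)) := by
        congr with x
        simp only [smul_eq_mul]
        field_simp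
    _ = v * ∫ x, f' x * gaussianPDFReal m v x := by
        rw [integral_const_mul, hparts, neg_mul_neg]
    _ = v * ∫ x, gaussianPDFReal m v x • f' x := by
        simp only [smul_eq_mul, mul_comm]

end Stein

section Hermite

open Polynomial

lemma iterate_derivative_natDegree {R : Type*} [CommSemiring R] (p : R[X]) :
    derivative^[p.natDegree] p = C (p.natDegree ! * p.leadingCoeff) := by
  have hdegree : (derivative^[p.natDegree] p).natDegree = 0 := by
    simpa using natDegree_iterate_derivative p p.natDegree
  rw [eq_C_of_natDegree_eq_zero hdegree, coeff_iterate_derivative]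
  simp [Nat.descFactorial_self]

/-- The Hermite polynomials with real coefficients, as a sequence of polynomials of degree `n`. -/
def realHermite : Polynomial.Sequence ℝ where
  elems' n := (hermite n).map (Int.castRingHom ℝ)
  degree_eq' n := by rw [(hermite_monic n).degree_map, degree_hermite]

lemma eval_realHermite (n : ℕ) (t : ℝ) : (realHermite n).eval t = aeval t (hermite n) :=
  eval_map_algebraMap (hermite n) t

lemma realHermite_zero : realHermite 0 = 1 := by
  simp [realHermite]

lemma realHermite_succ (n : ℕ) :
    realHermite (n + 1) = X * realHermite n - derivative (realHermite n) := by
  simp [realHermite, hermite_succ, derivative_map]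

lemma leadingCoeff_realHermite (n : ℕ) : (realHermite n).leadingCoeff = 1 :=
  (hermite_monic n).map _

lemma zero_mem_interior_integrableExpSet_gaussianReal (m : ℝ) (v : NNReal) :
    0 ∈ interior (integrableExpSet id (gaussianReal m v)) := by
  simp

lemma integral_eval_X_mul_gaussianReal (p : ℝ[X]) :
    ∫ x, (X * p).eval x ∂(gaussianReal 0 1) = ∫ x, (derivative p).eval x ∂(gaussianReal 0 1) := by
  have hint := integrable_polynomial_eval (zero_mem_interior_integrableExpSet_gaussianReal 0 1)
  have hmul := hint (X * p)
  simp only [eval_mul, eval_X] at hmul ⊢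
  simpa using integral_sub_mean_mul_gaussianReal p.hasDerivAt (hint p) (hint (derivative p))
    (by simpa only [sub_zero] using hmul)

lemma integral_eval_realHermite_mul (n : ℕ) (q : ℝ[X]) :
    ∫ x, (realHermite n * q).eval x ∂(gaussianReal 0 1)
      = ∫ x, (derivative^[n] q).eval x ∂(gaussianReal 0 1) := by
  have hint := integrable_polynomial_eval (zero_mem_interior_integrableExpSet_gaussianReal 0 1)
  induction n generalizing q with
  | zero => simp [realHermite_zero]
  | succ n ih =>
    have hsucc : realHermite (n + 1) * q
        = X * (realHermite n * q) - derivative (realHermite n) * q := by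
      rw [realHermite_succ]; ring
    calc ∫ x, (realHermite (n + 1) * q).eval x ∂(gaussianReal 0 1)
        = ∫ x, (X * (realHermite n * q)).eval x ∂(gaussianReal 0 1)
          - ∫ x, (derivative (realHermite n) * q).eval x ∂(gaussianReal 0 1) := by
          rw [hsucc, ← integral_sub (hint _) (hint _)]
          simp only [eval_sub]
      _ = ∫ x, (derivative (realHermite n * q) - derivative (realHermite n) * q).eval x
            ∂(gaussianReal 0 1) := by
          rw [integral_eval_X_mul_gaussianReal, ← integral_sub (hint _) (hint _)]
          simp only [eval_sub]
      _ = ∫ x, (realHermite n * derivative q).eval x ∂(gaussianReal 0 1) := by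
          rw [derivative_mul, add_sub_cancel_left]
      _ = ∫ x, (derivative^[n + 1] q).eval x ∂(gaussianReal 0 1) := by
          rw [ih, Function.iterate_succ_apply]

lemma integral_eval_realHermite_mul_of_lt {m n : ℕ} (h : n < m) :
    ∫ x, (realHermite m * realHermite n).eval x ∂(gaussianReal 0 1) = 0 := by
  rw [integral_eval_realHermite_mul, iterate_derivative_eq_zero (by simpa using h)]
  simp

lemma integral_eval_realHermite_mul_self (n : ℕ) :
    ∫ x, (realHermite n * realHermite n).eval x ∂(gaussianReal 0 1) = n ! := by
  have hderiv := iterate_derivative_natDegree (realHermite n)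
  rw [realHermite.natDegree_eq, leadingCoeff_realHermite, mul_one] at hderiv
  rw [integral_eval_realHermite_mul, hderiv]
  simp

lemma integral_eval_realHermite_mul_realHermite (m n : ℕ) :
    ∫ x, (realHermite m * realHermite n).eval x ∂(gaussianReal 0 1)
      = if m = n then (n ! : ℝ) else 0 := by
  rcases lt_trichotomy m n with hlt | rfl | hgt
  · rw [if_neg hlt.ne, mul_comm, integral_eval_realHermite_mul_of_lt hlt]
  · rw [if_pos rfl, integral_eval_realHermite_mul_self]
  · rw [if_neg hgt.ne', integral_eval_realHermite_mul_of_lt hgt]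

/-- The polynomials `He_n/√(n!)`, whose evaluation functions are `normalizedHermite n`. -/
def normalizedHermitePolynomial : Polynomial.Sequence ℝ where
  elems' n := C (√(n ! : ℝ))⁻¹ * realHermite n
  degree_eq' n := by rw [degree_C_mul (by positivity), realHermite.degree_eq]

lemma eval_normalizedHermitePolynomial (n : ℕ) (t : ℝ) :
    (normalizedHermitePolynomial n).eval t = normalizedHermite n t := by
  simp [normalizedHermitePolynomial, normalizedHermite, eval_realHermite, div_eq_inv_mul]

lemma integral_eval_normalizedHermitePolynomial_mul (m n : ℕ) :
    ∫ x, (normalizedHermitePolynomial m * normalizedHermitePolynomial n).eval x ∂(gaussianReal 0 1)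
      = if m = n then 1 else 0 := by
  have hfactor : normalizedHermitePolynomial m * normalizedHermitePolynomial n
      = C ((√(m ! : ℝ))⁻¹ * (√(n ! : ℝ))⁻¹) * (realHermite m * realHermite n) := by
    simp only [normalizedHermitePolynomial, C_mul]
    ring
  simp_rw [hfactor, eval_C_mul]
  rw [integral_const_mul, integral_eval_realHermite_mul_realHermite]
  split_ifs with hmn
  · subst hmn
    rw [← mul_inv, Real.mul_self_sqrt (by positivity), inv_mul_cancel₀ (by positivity)]
  · rw [mul_zero]

end Hermite

/-- The normalized probabilists' Hermite polynomials form a Hilbert basis (a complete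
orthonormal system) of `L²(ℝ, γ)` where `γ` is the standard Gaussian measure: the Hermite
polynomials satisfy `∫ He_m·He_n dγ = n!·δ_{mn}`, and any family `g` of elements of
`L²(ℝ, γ)` representing the functions `t ↦ He_n(t)/√(n!)` is orthonormal with dense span. -/
theorem normalizedHermite_hilbertBasis
    (g : ℕ → Lp ℝ 2 (gaussianReal 0 1))
    (hg : ∀ n, (g n : ℝ → ℝ) =ᵐ[gaussianReal 0 1] normalizedHermite n) :
    (∀ m n : ℕ, ∫ t, Polynomial.aeval t (Polynomial.hermite m) *
          Polynomial.aeval t (Polynomial.hermite n) ∂(gaussianReal 0 1)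
        = if m = n then (n ! : ℝ) else 0)
    ∧ Orthonormal ℝ g
    ∧ (Submodule.span ℝ (Set.range g)).topologicalClosure = ⊤ := by
  have hγ := zero_mem_interior_integrableExpSet_gaussianReal 0 1
  obtain rfl : g = fun n ↦ polynomialToL2 hγ (normalizedHermitePolynomial n) := by
    funext n
    refine Lp.ext ((hg n).trans ?_)
    filter_upwards [coeFn_polynomialToL2 hγ (normalizedHermitePolynomial n)] with t ht
    rw [ht, eval_normalizedHermitePolynomial]
  refine ⟨fun m n ↦ ?_, ?_, topologicalClosure_span_polynomialToL2_sequence hγ _⟩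
  · simpa only [Polynomial.eval_mul, eval_realHermite]
      using integral_eval_realHermite_mul_realHermite m n
  · rw [orthonormal_iff_ite]
    intro m n
    rw [inner_polynomialToL2, integral_eval_normalizedHermitePolynomial_mul]

end
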